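/- Let q, a, b, c, d be nonzero complex numbers, r, s ≥ 0 integers, e_1,…,e_r and f_1,…,f_s complex numbers, and n ≥ 0 an integer. For 0 ≤ k ≤ n define α_k = ((−1)^k q^{k(k−1)/2})^{s−r} and A_k, B_k, C_k as follows: A_k = (a−b)(a−c)(bc−d)(1−d) α_k α_{n−k+1} · (bc/a, bc q^{−2}, c, d/q; q)_k (e_1,…,e_r; q)_k (bc/a, bc, c, dq; q)_{n−k} (e_1 q,…,e_r q; q)_{n−k} / [(q, a/q, b/q, bc/d; q)_k (f_1,…,f_s; q)_k (q, aq, bq, bc/d; q)_{n−k} (f_1 q,…,f_s q; q)_{n−k}]; B_k = (a−d)(1−b)(1−c)(bc−ad) α_k α_{n−k+1} · (bc/a, bc q^{−2}, c/q, d; q)_k (e_1,…,e_r; q)_k (bc/a, bc, cq, d; q)_{n−k} (e_1 q,…,e_r q; q)_{n−k} / [(q, a/q, b, bc/(dq); q)_k (f_1,…,f_s; q)_k (q, aq, b, bcq/d; q)_{n−k} (f_1 q,…,f_s q; q)_{n−k}]; C_k = (1−a)(b−d)(c−d)(a−bc) α_k α_{n−k+1} · (bc/(aq), bc q^{−2},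 c, d; q)_k (e_1,…,e_r; q)_k (bcq/a, bc, c, d; q)_{n−k} (e_1 q,…,e_r q; q)_{n−k} / [(q, a, b/q, bc/(dq); q)_k (f_1,…,f_s; q)_k (q, a, bq, bcq/d; q)_{n−k} (f_1 q,…,f_s q; q)_{n−k}]; and set A_{n+1} = B_{n+1} = C_{n+1} = 0. Assume every q-shifted factorial appearing in a denominator above is nonzero. Then for every k with 0 ≤ k ≤ n + 1, one has A_k − B_k + C_k + A_{n−k+1} − B_{n−k+1} + C_{n−k+1} = 0. -/

import Mathlib

/-!
Write `T_k = A_k - B_k + C_k`; the claim is `T_k + T_{n+1-k} = 0`. The factors coming from `α`, the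
`e_i` and the `f_i` are common to `A_k`, `B_k` and `C_k`, and their product (`weight`) is invariant
under `k ↦ n + 1 - k` for `1 ≤ k ≤ n`, because `(e; q)_{i+1} (eq; q)_j = (1 - e) (eq; q)_i (eq; q)_j`
is symmetric in `i` and `j`.

For `k = i + 1` and `n - k = j`, every remaining q-shifted factorial is an elementary factor times
one of base `a`, `b`, `c`, `d`, `bc/a`, `bc/d`, `bc` or `q`. Over a common denominator that is
symmetric in `i` and `j` up to the factor from `(q; q)_{i+1}`, the combination `A - B + C` becomes a
polynomial in `u = q ^ i`, `v = q ^ j`, `p = q⁻¹` which factors completely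
(`numerator_factorization`), with variable part `(p - u) (1 - bcup) (u - v) (1 - bcuv)`. The factor
`p - u` turns `(q; q)_{i+1}` into `(q; q)_i`, and `1 - bcup` turns `(bc/q²; q)_{i+1}` into a constant
times `(bc; q)_i`. What is left is a function symmetric in `i` and `j` times `q ^ i - q ^ j`
(`coreTerm_succ`), so `T_{i+1}` is antisymmetric under the exchange of `i` and `j`.

In the boundary case `{k, n + 1 - k} = {0, n + 1}`, `T_{n+1} = 0` by convention, and `T_0 = 0`
follows from a similar, simpler polynomial identity (`coreTerm_zero`).
-/

/-- The q-shifted factorial `(a;q)_n = ∏_{k=0}^{n-1} (1 - a q^k)`. -/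
noncomputable def qPoch (q a : ℂ) (n : ℕ) : ℂ := ∏ k ∈ Finset.range n, (1 - a * q ^ k)

/-! ### Shifts of q-shifted factorials -/

theorem qPoch_succ (q a : ℂ) (n : ℕ) : qPoch q a (n + 1) = qPoch q a n * (1 - a * q ^ n) :=
  Finset.prod_range_succ _ _

theorem qPoch_succ' (q a : ℂ) (n : ℕ) : qPoch q a (n + 1) = (1 - a) * qPoch q (a * q) n := by
  simp only [qPoch, Finset.prod_range_succ', pow_zero, mul_one, pow_succ']
  rw [mul_comm]
  congr 1
  exact Finset.prod_congr rfl fun k _ => by ring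

theorem qPoch_div_succ {q : ℂ} (hq : q ≠ 0) (a : ℂ) (n : ℕ) :
    qPoch q (a / q) (n + 1) = (1 - a / q) * qPoch q a n := by
  rw [qPoch_succ', div_mul_cancel₀ a hq]

theorem qPoch_shift (q a : ℂ) (n : ℕ) :
    (1 - a) * qPoch q (a * q) n = qPoch q a n * (1 - a * q ^ n) := by
  rw [← qPoch_succ', qPoch_succ]

/-! ### The weight and the core of `A_k - B_k + C_k` -/

/-- The part of `A_k - B_k + C_k` that does not involve `α`, the `e_i` and the `f_i`, with `l`
standing for `n - k`. -/
noncomputable def coreTerm (q a b c d : ℂ) (k l : ℕ) : ℂ :=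
  (a - b) * (a - c) * (b * c - d) * (1 - d) *
      (qPoch q (b * c / a) k * qPoch q (b * c / q ^ 2) k * qPoch q c k * qPoch q (d / q) k *
       (qPoch q (b * c / a) l * qPoch q (b * c) l * qPoch q c l * qPoch q (d * q) l)) /
      ((qPoch q q k * qPoch q (a / q) k * qPoch q (b / q) k * qPoch q (b * c / d) k) *
       (qPoch q q l * qPoch q (a * q) l * qPoch q (b * q) l * qPoch q (b * c / d) l)) -
    (a - d) * (1 - b) * (1 - c) * (b * c - a * d) *
      (qPoch q (b * c / a) k * qPoch q (b * c / q ^ 2) k * qPoch q (c / q) k * qPoch q d k *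
       (qPoch q (b * c / a) l * qPoch q (b * c) l * qPoch q (c * q) l * qPoch q d l)) /
      ((qPoch q q k * qPoch q (a / q) k * qPoch q b k * qPoch q (b * c / (d * q)) k) *
       (qPoch q q l * qPoch q (a * q) l * qPoch q b l * qPoch q (b * c * q / d) l)) +
    (1 - a) * (b - d) * (c - d) * (a - b * c) *
      (qPoch q (b * c / (a * q)) k * qPoch q (b * c / q ^ 2) k * qPoch q c k * qPoch q d k *
       (qPoch q (b * c * q / a) l * qPoch q (b * c) l * qPoch q c l * qPoch q d l)) /
      ((qPoch q q k * qPoch q a k * qPoch q (b / q) k * qPoch q (b * c / (d * q)) k) *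
       (qPoch q q l * qPoch q a l * qPoch q (b * q) l * qPoch q (b * c * q / d) l))

/-- The factor of `A_k - B_k + C_k` formed by `α`, the `e_i` and the `f_i`, with `l` standing
for `n - k`. -/
noncomputable def weight (q : ℂ) {r s : ℕ} (e : Fin r → ℂ) (f : Fin s → ℂ) (α : ℕ → ℂ)
    (k l : ℕ) : ℂ :=
  α k * α (l + 1) * ((∏ i, qPoch q (e i) k) * ∏ i, qPoch q (e i * q) l) /
    ((∏ i, qPoch q (f i) k) * ∏ i, qPoch q (f i * q) l)

/-- `(e; q)_{i+1} (eq; q)_j = (1 - e) (eq; q)_i (eq; q)_j` is symmetric in `i` and `j`. -/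
theorem prod_qPoch_swap (q : ℂ) {r : ℕ} (e : Fin r → ℂ) (i j : ℕ) :
    (∏ t, qPoch q (e t) (i + 1)) * ∏ t, qPoch q (e t * q) j =
      (∏ t, qPoch q (e t) (j + 1)) * ∏ t, qPoch q (e t * q) i := by
  rw [← Finset.prod_mul_distrib, ← Finset.prod_mul_distrib]
  refine Finset.prod_congr rfl fun t _ => ?_
  rw [qPoch_succ', qPoch_succ']
  ring

theorem weight_swap (q : ℂ) {r s : ℕ} (e : Fin r → ℂ) (f : Fin s → ℂ) (α : ℕ → ℂ) (i j : ℕ) :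
    weight q e f α (i + 1) j = weight q e f α (j + 1) i := by
  rw [weight, weight, prod_qPoch_swap q e, prod_qPoch_swap q f, mul_comm (α (i + 1))]

/-! ### Polynomial identities -/

/-- The polynomial identity behind the formula. Here `p`, `u`, `v` stand for `q⁻¹`, `q ^ i`,
`q ^ j`, and the three summands are, up to a common factor, the numerators of `A_{i+1}`, `B_{i+1}`
and `C_{i+1}` over a common denominator. -/
theorem numerator_factorization {a b c d x y : ℂ} (p u v : ℂ) (ha : a ≠ 0) (hd : d ≠ 0)
    (hy : y = b * c / a) (hx : x = b * c / d) :
    (a - b) * (a - c) * (-d) * (1 - y * u) * (1 - c * u) * (1 - d * p) * (1 - d * v) *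
          (1 - a * u) * (1 - b * u) * (1 - x * v) * (1 - x * p) -
        (a - d) * (b * c - a * d) * (1 - y * u) * (1 - c * p) * (1 - c * v) * (1 - d * u) *
          (1 - a * u) * (1 - b * p) * (1 - b * v) * (1 - x * u) +
        (b - d) * (c - d) * a * (1 - y * p) * (1 - y * v) * (1 - c * u) * (1 - d * u) *
          (1 - a * v) * (1 - a * p) * (1 - b * u) * (1 - x * u) =
      (a - b) * (a - c) * (a - d) * (b - d) * (c - d) * (b * c - a * d) / (a * d) *
        ((p - u) * (1 - b * c * u * p) * (u - v) * (1 - b * c * u * v)) := by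
  subst hx hy
  field_simp
  ring

/-- The polynomial identity behind the vanishing of `A_0 - B_0 + C_0`, where `v` stands for
`q ^ n`. -/
theorem numerator_zero {a b c d x y : ℂ} (v : ℂ) (ha : a ≠ 0) (hd : d ≠ 0)
    (hy : y = b * c / a) (hx : x = b * c / d) :
    (a - b) * (a - c) * (-d) * (1 - d * v) * (1 - x * v) -
        (a - d) * (b * c - a * d) * (1 - c * v) * (1 - b * v) +
        (b - d) * (c - d) * a * (1 - y * v) * (1 - a * v) = 0 := by
  subst hx hy
  field_simp
  ring

/-! ### The boundary term -/

theorem coreTerm_zero {q a b c d : ℂ} (ha : a ≠ 0) (hd : d ≠ 0) (n : ℕ)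
    (hqn : qPoch q q n ≠ 0) (han : qPoch q a n ≠ 0) (hbn : qPoch q b n ≠ 0)
    (hxn : qPoch q (b * c / d) n ≠ 0) (haq : qPoch q (a * q) n ≠ 0)
    (hbq : qPoch q (b * q) n ≠ 0) (hxq : qPoch q (b * c * q / d) n ≠ 0) :
    coreTerm q a b c d 0 n = 0 := by
  -- For `n = 0` the hypotheses do not exclude that `1 - a`, `1 - b` or `1 - bc/d` vanishes, so the
  -- divisions used below are not available.
  rcases n with _ | m
  · simp only [coreTerm, qPoch, Finset.range_zero, Finset.prod_empty]
    ring
  obtain ⟨y, hy⟩ : ∃ y, y = b * c / a := ⟨_, rfl⟩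
  obtain ⟨x, hx⟩ : ∃ x, x = b * c / d := ⟨_, rfl⟩
  have hyq' : b * c * q / a = y * q := by rw [hy]; ring
  have hxq' : b * c * q / d = x * q := by rw [hx]; ring
  have hzero : ∀ z, qPoch q z 0 = 1 := fun z => Finset.prod_range_zero _
  have h1 : ∀ {z}, qPoch q z (m + 1) ≠ 0 → 1 - z ≠ 0 := fun h h0 => h (by
    rw [qPoch_succ', h0, zero_mul])
  have hshift : ∀ {z}, qPoch q z (m + 1) ≠ 0 → qPoch q (z * q) (m + 1) ≠ 0 →
      1 - z * q ^ (m + 1) ≠ 0 := fun {z} h h' h0 => by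
    have := qPoch_shift q z (m + 1)
    rw [h0, mul_zero] at this
    exact mul_ne_zero (h1 h) h' this
  have hdiv : ∀ {z}, qPoch q z (m + 1) ≠ 0 → qPoch q (z * q) (m + 1) =
      qPoch q z (m + 1) * (1 - z * q ^ (m + 1)) / (1 - z) := fun {z} h => by
    rw [eq_div_iff (h1 h), mul_comm, qPoch_shift]
  rw [hxq'] at hxq
  rw [← hx] at hxn
  have a1 := h1 han
  have b1 := h1 hbn
  have x1 := h1 hxn
  have av := hshift han haq
  have bv := hshift hbn hbq
  have xv := hshift hxn hxq
  have eD := qPoch_shift q d (m + 1)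
  have eC := qPoch_shift q c (m + 1)
  have eY := qPoch_shift q y (m + 1)
  have hbcd : b * c - d = -d * (1 - x) := by rw [hx]; field_simp; ring
  have habc : a - b * c = a * (1 - y) := by rw [hy]; field_simp
  have key := numerator_zero (b := b) (c := c) (q ^ (m + 1)) ha hd hy hx
  rw [coreTerm, ← hy, ← hx, hyq', hxq', hdiv han, hdiv hbn, hdiv hxn, hbcd, habc]
  simp only [hzero]
  generalize q ^ (m + 1) = v at *
  generalize qPoch q (d * q) (m + 1) = DQ at *
  generalize qPoch q (c * q) (m + 1) = CQ at *
  generalize qPoch q (y * q) (m + 1) = YQ at *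
  generalize qPoch q a (m + 1) = an at *
  generalize qPoch q b (m + 1) = bn at *
  generalize qPoch q c (m + 1) = cn at *
  generalize qPoch q d (m + 1) = dn at *
  generalize qPoch q x (m + 1) = xn at *
  generalize qPoch q y (m + 1) = yn at *
  generalize qPoch q (b * c) (m + 1) = wn at *
  generalize qPoch q q (m + 1) = qn at *
  have hA : (a - b) * (a - c) * (-d * (1 - x)) * (1 - d) * (1 * 1 * 1 * 1 * (yn * wn * cn * DQ)) =
      (a - b) * (a - c) * (-d * (1 - x)) * (yn * wn * cn * (dn * (1 - d * v))) := by
    rw [← eD]; ring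
  have hB : (a - d) * (1 - b) * (1 - c) * (b * c - a * d) *
      (1 * 1 * 1 * 1 * (yn * wn * CQ * dn)) =
      (a - d) * (1 - b) * (b * c - a * d) * (yn * wn * (cn * (1 - c * v)) * dn) := by
    rw [← eC]; ring
  have hC : (1 - a) * (b - d) * (c - d) * (a * (1 - y)) *
      (1 * 1 * 1 * 1 * (YQ * wn * cn * dn)) =
      (1 - a) * (b - d) * (c - d) * a * ((yn * (1 - y * v)) * wn * cn * dn) := by
    rw [← eY]; ring
  rw [hA, hB, hC]
  calc _ = (1 - a) * (1 - b) * (1 - x) * yn * wn * cn * dn /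
        (qn * an * bn * xn * (1 - a * v) * (1 - b * v) * (1 - x * v)) *
      ((a - b) * (a - c) * (-d) * (1 - d * v) * (1 - x * v) -
        (a - d) * (b * c - a * d) * (1 - c * v) * (1 - b * v) +
        (b - d) * (c - d) * a * (1 - y * v) * (1 - a * v)) := by
        clear key hA hB hC eD eC eY hy hx hbcd habc
        field_simp
    _ = 0 := by rw [key, mul_zero]

/-! ### The interior terms -/

/-- `A_{i+1} - B_{i+1} + C_{i+1}` is, up to its weight, `q ^ i - q ^ j` times this expression, which
is symmetric in `i` and `j`; here `i + j + 1 = n`. -/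
noncomputable def symmFactor (q a b c d : ℂ) (i j : ℕ) : ℂ :=
  (a - b) * (a - c) * (a - d) * (b - d) * (c - d) * (b * c - a * d) *
      (1 - a) * (1 - b) * (1 - b * c / d) * ((1 - b * c / q ^ 2) * (1 - b * c / q)) *
      (1 - b * c * q ^ i * q ^ j) *
      ((qPoch q (b * c / a) i * qPoch q (b * c) i * qPoch q c i * qPoch q d i) *
       (qPoch q (b * c / a) j * qPoch q (b * c) j * qPoch q c j * qPoch q d j)) /
    (q * a * d * (1 - a / q) * (1 - b / q) * (1 - b * c / (d * q)) *
      ((qPoch q q i * qPoch q a (i + 1) * qPoch q b (i + 1) * qPoch q (b * c / d) (i + 1)) *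
       (qPoch q q j * qPoch q a (j + 1) * qPoch q b (j + 1) * qPoch q (b * c / d) (j + 1))))

theorem symmFactor_comm (q a b c d : ℂ) (i j : ℕ) :
    symmFactor q a b c d i j = symmFactor q a b c d j i := by
  unfold symmFactor
  ring

/-- `1 - a`, `1 - a / q` and `1 - a q ^ i` (likewise for `b` and `bc/d`) are nonzero because they
are factors of the nonvanishing factorials in the hypotheses. -/
theorem coreTerm_succ {q a b c d : ℂ} (hq : q ≠ 0) (ha : a ≠ 0) (hd : d ≠ 0) (i j : ℕ)
    (hqi : qPoch q q (i + 1) ≠ 0) (hqj : qPoch q q (j + 1) ≠ 0)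
    (hai : qPoch q a (i + 1) ≠ 0) (haj : qPoch q a (j + 1) ≠ 0)
    (hbi : qPoch q b (i + 1) ≠ 0) (hbj : qPoch q b (j + 1) ≠ 0)
    (hxi : qPoch q (b * c / d) (i + 1) ≠ 0) (hxj : qPoch q (b * c / d) (j + 1) ≠ 0)
    (haq : qPoch q (a / q) (i + 1) ≠ 0) (hbq : qPoch q (b / q) (i + 1) ≠ 0)
    (hxq : qPoch q (b * c / (d * q)) (i + 1) ≠ 0) :
    coreTerm q a b c d (i + 1) j = symmFactor q a b c d i j * (q ^ i - q ^ j) := by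
  obtain ⟨y, hy⟩ : ∃ y, y = b * c / a := ⟨_, rfl⟩
  obtain ⟨x, hx⟩ : ∃ x, x = b * c / d := ⟨_, rfl⟩
  obtain ⟨p, hp⟩ : ∃ p, p = q⁻¹ := ⟨_, rfl⟩
  have hyq : b * c / (a * q) = y / q := by rw [hy, div_div]
  have hyq' : b * c * q / a = y * q := by rw [hy]; ring
  have hxq' : b * c / (d * q) = x / q := by rw [hx, div_div]
  have hxq'' : b * c * q / d = x * q := by rw [hx]; ring
  have hbcd : b * c - d = -d * (1 - x) := by rw [hx]; field_simp; ring
  have habc : a - b * c = a * (1 - y) := by rw [hy]; field_simp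
  have hdivp : ∀ z, z / q = z * p := fun z => by rw [hp, div_eq_mul_inv]
  have h1 : ∀ {z m}, qPoch q z (m + 1) ≠ 0 → 1 - z ≠ 0 := fun h h0 => h (by
    rw [qPoch_succ', h0, zero_mul])
  have hl : ∀ {z m}, qPoch q z (m + 1) ≠ 0 → qPoch q z m ≠ 0 ∧ 1 - z * q ^ m ≠ 0 := fun h => by
    rw [qPoch_succ] at h
    exact ⟨left_ne_zero_of_mul h, right_ne_zero_of_mul h⟩
  rw [hxq'] at hxq
  rw [← hx] at hxi hxj
  -- `(bc/q²; q)_{i+1}` gains the factor `1 - bc q^{i-1}` from the numerator factorization and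
  -- becomes a constant times `(bc; q)_i`.
  have hw : qPoch q (b * c / q ^ 2) (i + 1) * (1 - b * c * q ^ i * p) =
      (1 - b * c / q ^ 2) * (1 - b * c / q) * qPoch q (b * c) i := by
    have h2 : b * c / q ^ 2 = b * c / q / q := by rw [div_div, sq]
    have h3 : 1 - b * c * q ^ i * p = 1 - b * c / q ^ 2 * q ^ (i + 1) := by
      rw [hp]; field_simp; ring
    rw [h3, ← qPoch_succ, h2, qPoch_div_succ hq, qPoch_div_succ hq, mul_assoc]
  have hqq : qPoch q q (i + 1) = qPoch q q i * (q * (p - q ^ i)) := by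
    rw [qPoch_succ, hp, mul_sub q, mul_inv_cancel₀ hq]
  have a1 := h1 hai
  have b1 := h1 hbi
  have x1 := h1 hxi
  have ap := h1 haq
  have bp := h1 hbq
  have xp := h1 hxq
  obtain ⟨ai0, au⟩ := hl hai
  obtain ⟨aj0, av⟩ := hl haj
  obtain ⟨bi0, bu⟩ := hl hbi
  obtain ⟨bj0, bv⟩ := hl hbj
  obtain ⟨xi0, xu⟩ := hl hxi
  obtain ⟨xj0, xv⟩ := hl hxj
  obtain ⟨qi0, -⟩ := hl hqi
  obtain ⟨qj0, -⟩ := hl hqj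
  have pu : p - q ^ i ≠ 0 := fun h => hqi (by rw [hqq, h, mul_zero, mul_zero])
  have eD := qPoch_shift q d j
  have eC := qPoch_shift q c j
  have eY := qPoch_shift q y j
  have eA := qPoch_shift q a j
  have eB := qPoch_shift q b j
  have eX := qPoch_shift q x j
  have key := numerator_factorization (b := b) (c := c) p (q ^ i) (q ^ j) ha hd hy hx
  rw [coreTerm, symmFactor, ← hy, ← hx, hyq, hyq', hxq', hxq'', hbcd, habc, hqq]
  simp only [qPoch_div_succ hq a, qPoch_div_succ hq b, qPoch_div_succ hq c, qPoch_div_succ hq d,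
    qPoch_div_succ hq x, qPoch_div_succ hq y]
  simp only [qPoch_succ q a, qPoch_succ q b, qPoch_succ q c, qPoch_succ q d, qPoch_succ q x,
    qPoch_succ q y]
  -- From here on only polynomial relations between the factorials matter, so they become atoms.
  generalize qPoch q (b * c / q ^ 2) (i + 1) = H at *
  generalize (1 - b * c / q ^ 2) * (1 - b * c / q) = κ at *
  simp only [hdivp] at *
  clear hl h1 hqi hqj hai haj hbi hbj hxi hxj haq hbq hxq hqq
  clear hyq hyq' hxq' hxq'' hbcd habc hdivp
  generalize q ^ i = u at *
  generalize q ^ j = v at *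
  generalize qPoch q (d * q) j = DQ at *
  generalize qPoch q (c * q) j = CQ at *
  generalize qPoch q (y * q) j = YQ at *
  generalize qPoch q (a * q) j = AQ at *
  generalize qPoch q (b * q) j = BQ at *
  generalize qPoch q (x * q) j = XQ at *
  generalize qPoch q a i = ai at *
  generalize qPoch q b i = bi at *
  generalize qPoch q c i = ci at *
  generalize qPoch q d i = di at *
  generalize qPoch q x i = xi at *
  generalize qPoch q y i = yi at *
  generalize qPoch q (b * c) i = wi at *
  generalize qPoch q q i = qi at *
  generalize qPoch q a j = aj at *
  generalize qPoch q b j = bj at *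
  generalize qPoch q c j = cj at *
  generalize qPoch q d j = dj at *
  generalize qPoch q x j = xj at *
  generalize qPoch q y j = yj at *
  generalize qPoch q (b * c) j = wj at *
  generalize qPoch q q j = qj at *
  have hA : (a - b) * (a - c) * (-d * (1 - x)) * (1 - d) *
      (yi * (1 - y * u) * H * (ci * (1 - c * u)) * ((1 - d * p) * di) * (yj * wj * cj * DQ)) =
      (a - b) * (a - c) * (-d * (1 - x)) *
      (yi * (1 - y * u) * H * (ci * (1 - c * u)) * ((1 - d * p) * di) *
        (yj * wj * cj * (dj * (1 - d * v)))) := by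
    rw [← eD]; ring
  have hB : (a - d) * (1 - b) * (1 - c) * (b * c - a * d) *
      (yi * (1 - y * u) * H * ((1 - c * p) * ci) * (di * (1 - d * u)) * (yj * wj * CQ * dj)) =
      (a - d) * (1 - b) * (b * c - a * d) *
      (yi * (1 - y * u) * H * ((1 - c * p) * ci) * (di * (1 - d * u)) *
        (yj * wj * (cj * (1 - c * v)) * dj)) := by
    rw [← eC]; ring
  have hC : (1 - a) * (b - d) * (c - d) * (a * (1 - y)) *
      ((1 - y * p) * yi * H * (ci * (1 - c * u)) * (di * (1 - d * u)) * (YQ * wj * cj * dj)) =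
      (1 - a) * (b - d) * (c - d) * a *
      ((1 - y * p) * yi * H * (ci * (1 - c * u)) * (di * (1 - d * u)) *
        ((yj * (1 - y * v)) * wj * cj * dj)) := by
    rw [← eY]; ring
  rw [hA, hB, hC]
  clear hA hB hC eD eC eY
  clear hy hx hp
  generalize 1 - a = a₁ at *
  generalize 1 - b = b₁ at *
  generalize 1 - x = x₁ at *
  generalize 1 - a * u = au' at *
  generalize 1 - a * v = av' at *
  generalize 1 - a * p = ap' at *
  generalize 1 - b * u = bu' at *
  generalize 1 - b * v = bv' at *
  generalize 1 - b * p = bp' at *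
  generalize 1 - x * u = xu' at *
  generalize 1 - x * v = xv' at *
  generalize 1 - x * p = xp' at *
  generalize 1 - c * u = cu' at *
  generalize 1 - c * v = cv' at *
  generalize 1 - c * p = cp' at *
  generalize 1 - d * u = du' at *
  generalize 1 - d * v = dv' at *
  generalize 1 - d * p = dp' at *
  generalize 1 - y * u = yu' at *
  generalize 1 - y * v = yv' at *
  generalize 1 - y * p = yp' at *
  generalize (a - b) * (a - c) = s₁ at *
  generalize b * c - a * d = s₂ at *
  generalize a - d = s₃ at *
  generalize b - d = s₄ at *
  generalize c - d = s₅ at *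
  generalize 1 - b * c * u * p = s₆ at *
  generalize 1 - b * c * u * v = s₇ at *
  generalize p - u = p_u at *
  generalize u - v = u_v at *
  -- The three fractions over a common denominator. Each is expanded by exactly those factors of it
  -- that its own denominator lacks.
  have fA : s₁ * (-d * x₁) *
      (yi * yu' * H * (ci * cu') * (dp' * di) * (yj * wj * cj * (dj * dv'))) /
      (qi * (q * p_u) * (ap' * ai) * (bp' * bi) * (xi * xu') * (qj * AQ * BQ * xj)) =
      a₁ * b₁ * x₁ * H * (yi * ci * di) * (yj * wj * cj * dj) /
      (q * p_u * ap' * bp' * xp' * (qi * (ai * au') * (bi * bu') * (xi * xu') *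
        (qj * (aj * av') * (bj * bv') * (xj * xv')))) *
      (s₁ * -d * yu' * cu' * dp' * dv' * au' * bu' * xv' * xp') := by
    rw [← eA, ← eB, div_mul_eq_mul_div, ← mul_div_mul_right _ _
      (mul_ne_zero (mul_ne_zero (mul_ne_zero (mul_ne_zero (mul_ne_zero xp au) bu) a1) b1) xv :
        xp' * au' * bu' * a₁ * b₁ * xv' ≠ 0)]
    congr 1 <;> ring
  have fB : s₃ * b₁ * s₂ *
      (yi * yu' * H * (cp' * ci) * (di * du') * (yj * wj * (cj * cv') * dj)) /
      (qi * (q * p_u) * (ap' * ai) * (bi * bu') * (xp' * xi) * (qj * AQ * bj * XQ)) =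
      a₁ * b₁ * x₁ * H * (yi * ci * di) * (yj * wj * cj * dj) /
      (q * p_u * ap' * bp' * xp' * (qi * (ai * au') * (bi * bu') * (xi * xu') *
        (qj * (aj * av') * (bj * bv') * (xj * xv')))) *
      (s₃ * s₂ * yu' * cp' * cv' * du' * au' * bp' * bv' * xu') := by
    rw [← eA, ← eX, div_mul_eq_mul_div, ← mul_div_mul_right _ _
      (mul_ne_zero (mul_ne_zero (mul_ne_zero (mul_ne_zero (mul_ne_zero bp au) xu) a1) bv) x1 :
        bp' * au' * xu' * a₁ * bv' * x₁ ≠ 0)]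
    congr 1 <;> ring
  have fC : a₁ * s₄ * s₅ * a *
      (yp' * yi * H * (ci * cu') * (di * du') * (yj * yv' * wj * cj * dj)) /
      (qi * (q * p_u) * (ai * au') * (bp' * bi) * (xp' * xi) * (qj * aj * BQ * XQ)) =
      a₁ * b₁ * x₁ * H * (yi * ci * di) * (yj * wj * cj * dj) /
      (q * p_u * ap' * bp' * xp' * (qi * (ai * au') * (bi * bu') * (xi * xu') *
        (qj * (aj * av') * (bj * bv') * (xj * xv')))) *
      (s₄ * s₅ * a * yp' * yv' * cu' * du' * av' * ap' * bu' * xu') := by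
    rw [← eB, ← eX, div_mul_eq_mul_div, ← mul_div_mul_right _ _
      (mul_ne_zero (mul_ne_zero (mul_ne_zero (mul_ne_zero (mul_ne_zero ap bu) xu) av) b1) x1 :
        ap' * bu' * xu' * av' * b₁ * x₁ ≠ 0)]
    congr 1 <;> ring
  rw [fA, fB, fC, ← mul_sub, ← mul_add, key]
  clear fA fB fC key
  calc _ = s₁ * s₃ * s₄ * s₅ * s₂ * a₁ * b₁ * x₁ * (H * s₆) * (yi * ci * di) *
          (yj * wj * cj * dj) * (u_v * s₇) * p_u /
        (q * a * d * ap' * bp' * xp' * (qi * (ai * au') * (bi * bu') * (xi * xu') *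
          (qj * (aj * av') * (bj * bv') * (xj * xv'))) *
          p_u) := by
        rw [div_mul_eq_mul_div, div_mul_eq_mul_div, mul_div_assoc', div_div]
        congr 1 <;> ring
    _ = _ := by
        rw [hw, mul_div_mul_right _ _ pu, div_mul_eq_mul_div]
        congr 1
        ring

/-- Termwise form of the quadratic formula:
`A_k - B_k + C_k + A_{n-k+1} - B_{n-k+1} + C_{n-k+1} = 0` for `0 ≤ k ≤ n+1`,
where `A_{n+1} = B_{n+1} = C_{n+1} = 0`. -/
theorem quadratic_formula_termwise
    (q a b c d : ℂ) (hq : q ≠ 0) (ha : a ≠ 0) (hb : b ≠ 0) (hc : c ≠ 0) (hd : d ≠ 0)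
    (r s : ℕ) (e : Fin r → ℂ) (f : Fin s → ℂ) (n : ℕ)
    (α : ℕ → ℂ)
    (hα : ∀ k : ℕ, α k = ((-1 : ℂ) ^ k * q ^ (k * (k - 1) / 2)) ^ ((s : ℤ) - (r : ℤ)))
    (A B C : ℕ → ℂ)
    (hA : ∀ k ≤ n, A k =
      (a - b) * (a - c) * (b * c - d) * (1 - d) * α k * α (n + 1 - k) *
        (qPoch q (b * c / a) k * qPoch q (b * c / q ^ 2) k * qPoch q c k * qPoch q (d / q) k *
          (∏ i, qPoch q (e i) k) *
         (qPoch q (b * c / a) (n - k) * qPoch q (b * c) (n - k) * qPoch q c (n - k) *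
          qPoch q (d * q) (n - k) * ∏ i, qPoch q (e i * q) (n - k))) /
        ((qPoch q q k * qPoch q (a / q) k * qPoch q (b / q) k * qPoch q (b * c / d) k *
          (∏ i, qPoch q (f i) k)) *
         (qPoch q q (n - k) * qPoch q (a * q) (n - k) * qPoch q (b * q) (n - k) *
          qPoch q (b * c / d) (n - k) * ∏ i, qPoch q (f i * q) (n - k))))
    (hB : ∀ k ≤ n, B k =
      (a - d) * (1 - b) * (1 - c) * (b * c - a * d) * α k * α (n + 1 - k) *
        (qPoch q (b * c / a) k * qPoch q (b * c / q ^ 2) k * qPoch q (c / q) k * qPoch q d k *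
          (∏ i, qPoch q (e i) k) *
         (qPoch q (b * c / a) (n - k) * qPoch q (b * c) (n - k) * qPoch q (c * q) (n - k) *
          qPoch q d (n - k) * ∏ i, qPoch q (e i * q) (n - k))) /
        ((qPoch q q k * qPoch q (a / q) k * qPoch q b k * qPoch q (b * c / (d * q)) k *
          (∏ i, qPoch q (f i) k)) *
         (qPoch q q (n - k) * qPoch q (a * q) (n - k) * qPoch q b (n - k) *
          qPoch q (b * c * q / d) (n - k) * ∏ i, qPoch q (f i * q) (n - k))))
    (hC : ∀ k ≤ n, C k =
      (1 - a) * (b - d) * (c - d) * (a - b * c) * α k * α (n + 1 - k) *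
        (qPoch q (b * c / (a * q)) k * qPoch q (b * c / q ^ 2) k * qPoch q c k * qPoch q d k *
          (∏ i, qPoch q (e i) k) *
         (qPoch q (b * c * q / a) (n - k) * qPoch q (b * c) (n - k) * qPoch q c (n - k) *
          qPoch q d (n - k) * ∏ i, qPoch q (e i * q) (n - k))) /
        ((qPoch q q k * qPoch q a k * qPoch q (b / q) k * qPoch q (b * c / (d * q)) k *
          (∏ i, qPoch q (f i) k)) *
         (qPoch q q (n - k) * qPoch q a (n - k) * qPoch q (b * q) (n - k) *
          qPoch q (b * c * q / d) (n - k) * ∏ i, qPoch q (f i * q) (n - k))))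
    (hden : ∀ k ≤ n,
      qPoch q q k ≠ 0 ∧ qPoch q (a / q) k ≠ 0 ∧ qPoch q (b / q) k ≠ 0 ∧
      qPoch q (b * c / d) k ≠ 0 ∧ qPoch q (a * q) k ≠ 0 ∧ qPoch q (b * q) k ≠ 0 ∧
      qPoch q a k ≠ 0 ∧ qPoch q b k ≠ 0 ∧ qPoch q (b * c / (d * q)) k ≠ 0 ∧
      qPoch q (b * c * q / d) k ≠ 0 ∧
      (∀ i, qPoch q (f i) k ≠ 0) ∧ (∀ i, qPoch q (f i * q) k ≠ 0))
    (hA' : A (n + 1) = 0) (hB' : B (n + 1) = 0) (hC' : C (n + 1) = 0) :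
    ∀ k ≤ n + 1,
      A k - B k + C k + (A (n + 1 - k) - B (n + 1 - k) + C (n + 1 - k)) = 0 := by
  have hT : ∀ k ≤ n, A k - B k + C k = weight q e f α k (n - k) * coreTerm q a b c d k (n - k) := by
    intro k hk
    rw [hA k hk, hB k hk, hC k hk, weight, coreTerm, Nat.sub_add_comm hk]
    ring
  have hT0 : A 0 - B 0 + C 0 = 0 := by
    obtain ⟨hqn, -, -, hxn, haq, hbq, han, hbn, -, hxq, -, -⟩ := hden n le_rfl
    rw [hT 0 n.zero_le, Nat.sub_zero, coreTerm_zero ha hd n hqn han hbn hxn haq hbq hxq, mul_zero]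
  have hTlast : A (n + 1) - B (n + 1) + C (n + 1) = 0 := by
    rw [hA', hB', hC', sub_zero, add_zero]
  have hTsucc : ∀ i j, i + j + 1 = n → A (i + 1) - B (i + 1) + C (i + 1) =
      weight q e f α (i + 1) j * (symmFactor q a b c d i j * (q ^ i - q ^ j)) := by
    intro i j hij
    obtain ⟨hqi, haqi, hbqi, hxi, -, -, hai, hbi, hxqi, -, -, -⟩ := hden (i + 1) (by lia)
    obtain ⟨hqj, -, -, hxj, -, -, haj, hbj, -, -, -, -⟩ := hden (j + 1) (by lia)
    rw [hT (i + 1) (by lia), show n - (i + 1) = j by lia,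
      coreTerm_succ hq ha hd i j hqi hqj hai haj hbi hbj hxi hxj haqi hbqi hxqi]
  intro k hk
  rcases k with _ | i
  · rw [Nat.sub_zero, hT0, hTlast, add_zero]
  · obtain ⟨j, hj⟩ := Nat.exists_eq_add_of_le hk
    rcases j with _ | j
    · obtain rfl : i = n := by lia
      rw [Nat.sub_self, hT0, hTlast, add_zero]
    · rw [show n + 1 - (i + 1) = j + 1 by lia, hTsucc i j (by lia), hTsucc j i (by lia),
        weight_swap q e f α j i, symmFactor_comm q a b c d j i]
      ring
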